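/- The damping coefficients solve the EDDI linear system (Eq. 5): In the unforced case F ≡ 0 with V(0) = 0, suppose the non-conservative force is a linear combination of M continuous candidate functions, d(t) = Σ_{j=1}^{M} bⱼ·Bⱼ(t), and let 0 ≤ γ₀ ≤ γ₁ ≤ … ≤ γ_N be times with x(γᵢ) = 0 for all i. Define the N×M matrix Q by Q_{ij} = ∫_{γ₀}^{γᵢ} x'(τ)·Bⱼ(τ) dτ and the vector R by Rᵢ = T(γ₀) − T(γᵢ). Then the coefficient vector b = (b₁,…,b_M) satisfies Q·b = R. -/

import Mathlib

open MeasureTheory intervalIntegral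

/-!
Along a solution of `m x'' + d + V'(x) = F` the mechanical energy changes at the rate
`x' (F - d)`. Between two times with the same potential energy only the kinetic terms of the
integrated balance survive, so the kinetic energy lost plus the work of `F` equals `∫ x' d`, which
is linear in the coefficients of `d`.
-/

/-- The kinetic energy `T` at time `t` of a mass `m` with displacement `x`. -/
noncomputable def kineticEnergy (m : ℝ) (x : ℝ → ℝ) (t : ℝ) : ℝ :=
  1 / 2 * m * deriv x t ^ 2

/-- The mechanical energy `E` at time `t` of a mass `m` with displacement `x` in the potential
`V`. -/
noncomputable def mechanicalEnergy (m : ℝ) (V x : ℝ → ℝ) (t : ℝ) : ℝ :=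
  kineticEnergy m x t + V (x t)

/-- The matrix `Q` of the EDDI system: row `i` holds the work done against each candidate force
`B j` between the reference time `t₀` and the time `γ i`. The reference time is kept apart from the
family `γ`, so that no row is trivially zero. -/
noncomputable def dissipationMatrix {ι κ : Type*} (x : ℝ → ℝ) (B : κ → ℝ → ℝ) (t₀ : ℝ)
    (γ : ι → ℝ) : Matrix ι κ ℝ :=
  Matrix.of fun i j => ∫ τ in t₀..γ i, deriv x τ * B j τ

section EnergyBalance

variable {m a c : ℝ} {x V d F : ℝ → ℝ}

theorem hasDerivAt_mechanicalEnergy {t : ℝ} (hx : DifferentiableAt ℝ x t)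
    (hx' : DifferentiableAt ℝ (deriv x) t) (hV : DifferentiableAt ℝ V (x t)) :
    HasDerivAt (mechanicalEnergy m V x)
      (deriv x t * (m * deriv (deriv x) t + deriv V (x t))) t := by
  have hkinetic : HasDerivAt (kineticEnergy m x) (m * deriv x t * deriv (deriv x) t) t :=
    ((hx'.hasDerivAt.pow 2).const_mul (1 / 2 * m)).congr_deriv (by norm_num; ring)
  have hpotential : HasDerivAt (fun s => V (x s)) (deriv V (x t) * deriv x t) t :=
    hV.hasDerivAt.comp t hx.hasDerivAt
  exact (hkinetic.add hpotential).congr_deriv (by ring)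

theorem integral_velocity_mul_force_eq_mechanicalEnergy_sub {G : ℝ → ℝ}
    (hx : Differentiable ℝ x) (hx' : Differentiable ℝ (deriv x)) (hV : Differentiable ℝ V)
    (hG : IntervalIntegrable G volume a c)
    (heom : ∀ t ∈ Set.uIcc a c, m * deriv (deriv x) t + deriv V (x t) = G t) :
    ∫ τ in a..c, deriv x τ * G τ = mechanicalEnergy m V x c - mechanicalEnergy m V x a := by
  refine integral_eq_sub_of_hasDerivAt (fun t ht => ?_)
    (hG.continuousOn_mul hx'.continuous.continuousOn)
  exact heom t ht ▸ hasDerivAt_mechanicalEnergy (hx t) (hx' t) (hV (x t))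

theorem integral_velocity_mul_damping_eq_mechanicalEnergy_sub_add
    (hx : Differentiable ℝ x) (hx' : Differentiable ℝ (deriv x)) (hV : Differentiable ℝ V)
    (hd : IntervalIntegrable d volume a c) (hF : IntervalIntegrable F volume a c)
    (heom : ∀ t ∈ Set.uIcc a c, m * deriv (deriv x) t + d t + deriv V (x t) = F t) :
    ∫ τ in a..c, deriv x τ * d τ =
      mechanicalEnergy m V x a - mechanicalEnergy m V x c + ∫ τ in a..c, deriv x τ * F τ := by
  have hvel : ContinuousOn (deriv x) (Set.uIcc a c) := hx'.continuous.continuousOn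
  have hnet := integral_velocity_mul_force_eq_mechanicalEnergy_sub (m := m)
    (G := fun t => F t - d t) hx hx' hV (hF.sub hd)
    fun t ht => by linear_combination heom t ht
  have hsplit : ∫ τ in a..c, deriv x τ * (F τ - d τ) =
      (∫ τ in a..c, deriv x τ * F τ) - ∫ τ in a..c, deriv x τ * d τ := by
    simp only [mul_sub]
    exact integral_sub (hF.continuousOn_mul hvel) (hd.continuousOn_mul hvel)
  linarith

end EnergyBalance

section LinearSystem

variable {ι κ : Type*} [Fintype κ] {x : ℝ → ℝ} {B : κ → ℝ → ℝ} {t₀ : ℝ} {γ : ι → ℝ}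

theorem dissipationMatrix_mulVec_apply {i : ι} (hx' : ContinuousOn (deriv x) (Set.uIcc t₀ (γ i)))
    (hB : ∀ j, IntervalIntegrable (B j) volume t₀ (γ i)) (b : κ → ℝ) :
    (dissipationMatrix x B t₀ γ).mulVec b i =
      ∫ τ in t₀..γ i, deriv x τ * ∑ j, b j * B j τ := by
  calc (dissipationMatrix x B t₀ γ).mulVec b i
      = ∑ j, ∫ τ in t₀..γ i, deriv x τ * B j τ * b j := by
        simp only [Matrix.mulVec, dotProduct, dissipationMatrix, Matrix.of_apply,
          intervalIntegral.integral_mul_const]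
    _ = ∫ τ in t₀..γ i, ∑ j, deriv x τ * B j τ * b j :=
        (integral_finsetSum fun j _ => ((hB j).continuousOn_mul hx').mul_const (b j)).symm
    _ = ∫ τ in t₀..γ i, deriv x τ * ∑ j, b j * B j τ := by
        simp only [Finset.mul_sum, mul_assoc, mul_comm (b _)]

theorem eddi_linear_system_general {m : ℝ} {V F : ℝ → ℝ} {b : κ → ℝ}
    (hx : Differentiable ℝ x) (hx' : Differentiable ℝ (deriv x)) (hV : Differentiable ℝ V)
    (hB : ∀ i j, IntervalIntegrable (B j) volume t₀ (γ i))
    (hF : ∀ i, IntervalIntegrable F volume t₀ (γ i))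
    (heom : ∀ i, ∀ t ∈ Set.uIcc t₀ (γ i),
      m * deriv (deriv x) t + ∑ j, b j * B j t + deriv V (x t) = F t)
    (hlevel : ∀ i, V (x (γ i)) = V (x t₀)) :
    (dissipationMatrix x B t₀ γ).mulVec b = fun i =>
      kineticEnergy m x t₀ - kineticEnergy m x (γ i) + ∫ τ in t₀..γ i, deriv x τ * F τ := by
  funext i
  have hdamping : IntervalIntegrable (fun τ => ∑ j, b j * B j τ) volume t₀ (γ i) := by
    simpa only [Finset.sum_fn] using
      IntervalIntegrable.sum Finset.univ fun j _ => (hB i j).const_mul (b j)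
  rw [dissipationMatrix_mulVec_apply hx'.continuous.continuousOn (hB i),
    integral_velocity_mul_damping_eq_mechanicalEnergy_sub_add hx hx' hV hdamping (hF i)
      (heom i),
    mechanicalEnergy, mechanicalEnergy, hlevel, add_sub_add_right_eq_sub]

end LinearSystem

/-- The damping coefficients solve the EDDI linear system (Eq. 5):
with `d(t) = Σⱼ bⱼ·Bⱼ(t)` and displacement zeros `γ₀ ≤ γ₁ ≤ … ≤ γ_N`,
the matrix `Q` of dissipation integrals and the vector `R` of kinetic-energy
drops satisfy `Q·b = R`. -/
theorem eddi_linear_system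
    (m : ℝ) (hm : 0 < m)
    (x : ℝ → ℝ) (hx : ContDiff ℝ 2 x)
    (d : ℝ → ℝ) (hd : Continuous d)
    (V : ℝ → ℝ) (hV : Differentiable ℝ V) (hV' : Continuous (deriv V))
    (F : ℝ → ℝ) (hF : Continuous F)
    (heom : ∀ t ≥ (0 : ℝ), m * deriv (deriv x) t + d t + deriv V (x t) = F t)
    (hF0 : ∀ t, F t = 0) (hV0 : V 0 = 0)
    (T : ℝ → ℝ)
    (hT : ∀ t, T t = 1 / 2 * m * (deriv x t) ^ 2)
    (M N : ℕ)
    (B : Fin M → ℝ → ℝ) (hB : ∀ j, Continuous (B j))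
    (b : Fin M → ℝ)
    (hdform : ∀ t, d t = ∑ j : Fin M, b j * B j t)
    (γ : Fin (N + 1) → ℝ) (hγ0 : 0 ≤ γ 0) (hγmono : Monotone γ)
    (hγzero : ∀ i, x (γ i) = 0)
    (Q : Matrix (Fin N) (Fin M) ℝ)
    (hQ : ∀ i j, Q i j = ∫ τ in (γ 0)..(γ i.succ), deriv x τ * B j τ)
    (R : Fin N → ℝ)
    (hR : ∀ i, R i = T (γ 0) - T (γ i.succ)) :
    Q.mulVec b = R := by
  obtain rfl : Q = dissipationMatrix x B (γ 0) fun i => γ i.succ := Matrix.ext hQ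
  have hnonneg (i : Fin N) : 0 ≤ γ 0 ⊓ γ i.succ := le_inf hγ0 (hγ0.trans (hγmono (Fin.zero_le _)))
  refine (eddi_linear_system_general (m := m) (hx.differentiable two_ne_zero)
    (hx.deriv'.differentiable one_ne_zero) hV (fun _ j => (hB j).intervalIntegrable _ _)
    (fun _ => hF.intervalIntegrable _ _)
    (fun i t ht => hdform t ▸ heom t ((hnonneg i).trans ht.1))
    fun i => by rw [hγzero, hγzero]).trans (funext fun i => ?_)
  simp only [hR, hT, hF0, kineticEnergy, mul_zero, intervalIntegral.integral_zero, add_zero]
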